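/- Let S denote the sum over all 64 triples (ε,j,δ) with ε ∈ {-1,1}^3, j ∈ {1,2,3,4}, δ ∈ {-1,1} of (2·e_1^5·e_2 − 10·e_1^3·e_2^2 + 10·e_1·e_2^3 − 2·e_1^4·e_3 + 11·e_1^2·e_2·e_3 − e_1·e_3^2 + 2·e_1^3·e_4 − 9·e_1·e_2·e_4 − 2·e_1^2·e_5 + 2·e_1·e_6)·e_1 / π, where all e_k and π are evaluated at D(ε,j,δ). Then S = 16128·(a_1+a_2+a_3 − b_1−b_2−b_3 − 2c). (This identity computes 120960·F_{Td^7} of the Nill–Paffenholz toric Fano 7-fold by the localization formula.) -/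

import Mathlib

/-!
The sum is evaluated one factor of the fixed-point set at a time, each time cancelling part of the
denominator.

Write `h₁, h₂, h₃` for the elementary symmetric polynomials of the three differences `b k - b j`,
and `u` for `c + 2 * b j`, the last entry of the tuple when all signs are `+1`.  The two numerators
in a `δ`-sum combine to twice the odd part in the last entry, which is divisible by that entry
(`numer_sub_numer_neg`).  Put `v = 2 * u - (a 0 + a 1 + a 2)`, so that the last entry becomes
`(v + ∑ i, ε i * a i) / 2`.  For fixed `v` the signed sum over `ε` is then odd in each `a i`, hence
divisible by `a 0 * a 1 * a 2`, and the quotient `residualQuartic` is a small polynomial of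
weighted degree 4, even in each `a i` (`signed_sum`).

What remains is the sum over `j` of a polynomial of degree 4 in `b j`, divided by
`∏ k ≠ j, (b k - b j)`.  This is a negated third divided difference, so that it only sees the
coefficients of degree 3 and 4 (`sum_quartic_div`).
-/

open Finset

noncomputable section

/-- Sign of a Boolean: `true ↦ 1`, `false ↦ -1`, encoding `{-1,1}`. -/
def sgn (b : Bool) : ℝ := if b then 1 else -1

/-- The eigenvalue 7-tuple `D(ε,j,δ)` (as a multiset) of the generic torus-induced
holomorphic vector field at the fixed point indexed by `(ε,j,δ)` on the
Nill–Paffenholz toric Fano 7-fold.  Here `a : Fin 3 → ℝ`, `b : Fin 4 → ℝ` (with `b 3 = 0`). -/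
def tup (a : Fin 3 → ℝ) (b : Fin 4 → ℝ) (c : ℝ) (ε : Fin 3 → Bool) (j : Fin 4) (δ : Bool) :
    Multiset ℝ :=
  ({sgn (ε 0) * a 0, sgn (ε 1) * a 1, sgn (ε 2) * a 2} : Multiset ℝ)
    + (Finset.univ.erase j).val.map (fun k => b k - b j)
    + {sgn δ * (c - (∑ i ∈ Finset.univ.filter (fun i => ε i = false), a i) + 2 * b j)}

/-- The `k`-th elementary symmetric polynomial of the entries of a multiset. -/
def esym (k : ℕ) (D : Multiset ℝ) : ℝ := ((D.powersetCard k).map Multiset.prod).sum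

theorem esym_zero (D : Multiset ℝ) : esym 0 D = 1 := by
  simp [esym]

theorem esym_succ_zero (k : ℕ) : esym (k + 1) 0 = 0 := by
  simp [esym, Multiset.powersetCard_zero_right]

theorem esym_succ_cons (k : ℕ) (x : ℝ) (D : Multiset ℝ) :
    esym (k + 1) (x ::ₘ D) = esym (k + 1) D + x * esym k D := by
  simp [esym, Multiset.powersetCard_cons, Multiset.map_map,
    Multiset.sum_map_mul_left]

/-- The numerator of a localization term as a polynomial in `e₁, …, e₆`. -/
def numerE (e₁ e₂ e₃ e₄ e₅ e₆ : ℝ) : ℝ :=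
  (2 * e₁ ^ 5 * e₂ - 10 * e₁ ^ 3 * e₂ ^ 2 + 10 * e₁ * e₂ ^ 3 - 2 * e₁ ^ 4 * e₃
    + 11 * e₁ ^ 2 * e₂ * e₃ - e₁ * e₃ ^ 2 + 2 * e₁ ^ 3 * e₄ - 9 * e₁ * e₂ * e₄
    - 2 * e₁ ^ 2 * e₅ + 2 * e₁ * e₆) * e₁

/-- The quotient by `u` of the part of `numerE` odd in the last entry `u`, in terms of the
elementary symmetric polynomials `f₁, …, f₆` of the other six entries. -/
def oddPart (f₁ f₂ f₃ f₄ f₅ f₆ u : ℝ) : ℝ :=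
  2 * f₁ ^ 7 - 10 * f₁ ^ 5 * f₂ + 3 * f₁ ^ 4 * f₃ + f₁ ^ 3 * f₂ ^ 2 - 7 * f₁ ^ 3 * f₂ * u ^ 2
    - 3 * f₁ ^ 3 * f₄ + 22 * f₁ ^ 2 * f₂ * f₃ + 7 * f₁ ^ 2 * f₃ * u ^ 2 - 4 * f₁ ^ 2 * f₅
    + 20 * f₁ * f₂ ^ 3 + 21 * f₁ * f₂ ^ 2 * u ^ 2 - 18 * f₁ * f₂ * f₄ - 7 * f₁ * f₂ * u ^ 4
    - 2 * f₁ * f₃ ^ 2 - 7 * f₁ * f₄ * u ^ 2 + 4 * f₁ * f₆ + 2 * f₁ * u ^ 6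

theorem numer_sub_numer_neg (f₁ f₂ f₃ f₄ f₅ f₆ u : ℝ) :
    numerE (f₁ + u) (f₂ + u * f₁) (f₃ + u * f₂) (f₄ + u * f₃) (f₅ + u * f₄) (f₆ + u * f₅)
      - numerE (f₁ + -u) (f₂ + -u * f₁) (f₃ + -u * f₂) (f₄ + -u * f₃) (f₅ + -u * f₄)
          (f₆ + -u * f₅)
      = 2 * u * oddPart f₁ f₂ f₃ f₄ f₅ f₆ u := by
  unfold numerE oddPart
  ring

/-- `oddPart` for six entries split as `x, y, z` and a triple with elementary symmetric
polynomials `h₁, h₂, h₃`. -/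
def oddSplit (h₁ h₂ h₃ x y z u : ℝ) : ℝ :=
  oddPart (x + y + z + h₁)
    (x * y + x * z + y * z + (x + y + z) * h₁ + h₂)
    (x * y * z + (x * y + x * z + y * z) * h₁ + (x + y + z) * h₂ + h₃)
    (x * y * z * h₁ + (x * y + x * z + y * z) * h₂ + (x + y + z) * h₃)
    (x * y * z * h₂ + (x * y + x * z + y * z) * h₃)
    (x * y * z * h₃) u

/-- What is left of the numerator after summation over `ε` and `δ`; here `v = 2 u - (x + y + z)`,
and `p₂, p₄` are the power sums of `x, y, z`. -/
def residualQuartic (p₂ p₄ h₁ h₂ h₃ v : ℝ) : ℝ :=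
  -504 * p₄ + p₂ * (2520 * h₁ ^ 2 + 144 * h₁ * v + 2520 * h₂ - 144 * v ^ 2) - 1512 * h₁ ^ 4
    + 11088 * h₁ ^ 2 * h₂ + 168 * h₁ ^ 2 * v ^ 2 + 2352 * h₁ * h₂ * v + 1512 * h₁ * h₃
    - 192 * h₁ * v ^ 3 + 4536 * h₂ ^ 2 + 168 * h₂ * v ^ 2 + 24 * v ^ 4

set_option maxHeartbeats 4000000 in
/-- The sum over `ε`, cleared of the denominator `± x * y * z`, whose sign is the sign of each
term. -/
theorem signed_sum (h₁ h₂ h₃ x y z u : ℝ) :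
    2 * (oddSplit h₁ h₂ h₃ x y z u - oddSplit h₁ h₂ h₃ (-x) y z (u - x)
      - oddSplit h₁ h₂ h₃ x (-y) z (u - y) - oddSplit h₁ h₂ h₃ x y (-z) (u - z)
      + oddSplit h₁ h₂ h₃ (-x) (-y) z (u - (x + y))
      + oddSplit h₁ h₂ h₃ (-x) y (-z) (u - (x + z))
      + oddSplit h₁ h₂ h₃ x (-y) (-z) (u - (y + z))
      - oddSplit h₁ h₂ h₃ (-x) (-y) (-z) (u - (x + y + z)))
      = x * y * z * residualQuartic (x ^ 2 + y ^ 2 + z ^ 2) (x ^ 4 + y ^ 4 + z ^ 4) h₁ h₂ h₃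
          (2 * u - (x + y + z)) := by
  unfold oddSplit oddPart residualQuartic
  ring

/-- Up to sign, the left side is the third divided difference, at the nodes `p, q, r, 0`, of the
quartic with coefficients `c₀, …, c₄`. -/
theorem sum_quartic_div (p q r : ℝ) (hp : p ≠ 0) (hq : q ≠ 0) (hr : r ≠ 0)
    (hpq : p - q ≠ 0) (hpr : p - r ≠ 0) (hqr : q - r ≠ 0) (c₀ c₁ c₂ c₃ c₄ : ℝ) :
    (c₀ + c₁ * p + c₂ * p ^ 2 + c₃ * p ^ 3 + c₄ * p ^ 4) / ((q - p) * (r - p) * (0 - p))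
      + (c₀ + c₁ * q + c₂ * q ^ 2 + c₃ * q ^ 3 + c₄ * q ^ 4) / ((p - q) * (r - q) * (0 - q))
      + (c₀ + c₁ * r + c₂ * r ^ 2 + c₃ * r ^ 3 + c₄ * r ^ 4) / ((p - r) * (q - r) * (0 - r))
      + c₀ / (p * q * r)
      = -(c₃ + c₄ * (p + q + r)) := by
  rw [← neg_sub p q, ← neg_sub p r, ← neg_sub q r, zero_sub, zero_sub, zero_sub]
  field_simp
  ring

/-- The sum over `j`, with `b = (p, q, r, 0)`. The function `F` is a shorthand for the summand, in
terms of the three differences and the node. -/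
theorem sum_residualQuartic_div (p q r : ℝ) (hp : p ≠ 0) (hq : q ≠ 0) (hr : r ≠ 0)
    (hpq : p - q ≠ 0) (hpr : p - r ≠ 0) (hqr : q - r ≠ 0) (p₂ p₄ w : ℝ)
    (F : ℝ → ℝ → ℝ → ℝ → ℝ)
    (hF : ∀ k l m t, F k l m t = residualQuartic p₂ p₄ (k + l + m) (k * l + k * m + l * m)
      (k * l * m) (w + 4 * t) / (k * l * m)) :
    F (q - p) (r - p) (0 - p) p + F (p - q) (r - q) (0 - q) q + F (p - r) (q - r) (0 - r) r
      + F p q r 0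
      = -16128 * (p + q + r + w) := by
  obtain ⟨s₁, hs₁⟩ : ∃ s, s = p + q + r := ⟨_, rfl⟩
  obtain ⟨s₂, hs₂⟩ : ∃ s, s = p * q + p * r + q * r := ⟨_, rfl⟩
  obtain ⟨s₃, hs₃⟩ : ∃ s, s = p * q * r := ⟨_, rfl⟩
  -- The coefficients of `residualQuartic` as a polynomial in the node `t`, at which the elementary
  -- symmetric polynomials of the differences are `s₁ - 4 t`, `s₂ - 3 s₁ t + 6 t ^ 2` and
  -- `s₃ - 2 s₂ t + 3 s₁ t ^ 2 - 4 t ^ 3`.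
  have key := sum_quartic_div p q r hp hq hr hpq hpr hqr
    (-1512 * s₁ ^ 4 + 11088 * s₁ ^ 2 * s₂ + 168 * s₁ ^ 2 * w ^ 2 + 2520 * s₁ ^ 2 * p₂
      + 2352 * s₁ * s₂ * w + 1512 * s₁ * s₃ - 192 * s₁ * w ^ 3 + 144 * s₁ * w * p₂
      + 4536 * s₂ ^ 2 + 168 * s₂ * w ^ 2 + 2520 * s₂ * p₂ + 24 * w ^ 4 - 144 * w ^ 2 * p₂
      - 504 * p₄)
    (-9072 * s₁ ^ 3 - 5712 * s₁ ^ 2 * w - 109536 * s₁ * s₂ - 4152 * s₁ * w ^ 2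
      - 27144 * s₁ * p₂ - 8064 * s₂ * w - 6048 * s₃ + 1152 * w ^ 3 - 1728 * w * p₂)
    (207312 * s₁ ^ 2 + 18336 * s₁ * w + 208992 * s₂ + 15216 * w ^ 2 + 50832 * p₂)
    (-737376 * s₁ + 16128 * w) 753504
  rw [← hs₁] at key ⊢
  refine Eq.trans ?_ (key.trans (by ring))
  simp only [hF]
  refine congrArg₂ _ (congrArg₂ _ (congrArg₂ _ ?_ ?_) ?_) ?_ <;>
  · congr 1
    rw [hs₁, hs₂, hs₃]
    unfold residualQuartic
    ring

/-- The localization term of a 7-tuple. -/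
def locTerm (D : Multiset ℝ) : ℝ :=
  numerE (esym 1 D) (esym 2 D) (esym 3 D) (esym 4 D) (esym 5 D) (esym 6 D) / D.prod

theorem locTerm_add_neg (x y z k l m u : ℝ) (hu : u ≠ 0) :
    locTerm (u ::ₘ {x, y, z, k, l, m}) + locTerm (-u ::ₘ {x, y, z, k, l, m})
      = 2 * oddSplit (k + l + m) (k * l + k * m + l * m) (k * l * m) x y z u
          / (x * y * z * (k * l * m)) := by
  have hodd : ∀ n n₂ d : ℝ, n / (u * d) + n₂ / (-u * d) = (n - n₂) / (u * d) := by
    intro n n₂ d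
    rw [neg_mul, div_neg, sub_div, sub_eq_add_neg]
  have e₁ : esym 1 {x, y, z, k, l, m} = x + y + z + (k + l + m) := by
    simp only [Multiset.insert_eq_cons, ← Multiset.cons_zero, esym_succ_cons, esym_zero,
      esym_succ_zero]
    ring
  have e₂ : esym 2 {x, y, z, k, l, m} = x * y + x * z + y * z + (x + y + z) * (k + l + m)
      + (k * l + k * m + l * m) := by
    simp only [Multiset.insert_eq_cons, ← Multiset.cons_zero, esym_succ_cons, esym_zero,
      esym_succ_zero]
    ring
  have e₃ : esym 3 {x, y, z, k, l, m} = x * y * z + (x * y + x * z + y * z) * (k + l + m)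
      + (x + y + z) * (k * l + k * m + l * m) + k * l * m := by
    simp only [Multiset.insert_eq_cons, ← Multiset.cons_zero, esym_succ_cons, esym_zero,
      esym_succ_zero]
    ring
  have e₄ : esym 4 {x, y, z, k, l, m} = x * y * z * (k + l + m)
      + (x * y + x * z + y * z) * (k * l + k * m + l * m) + (x + y + z) * (k * l * m) := by
    simp only [Multiset.insert_eq_cons, ← Multiset.cons_zero, esym_succ_cons, esym_zero,
      esym_succ_zero]
    ring
  have e₅ : esym 5 {x, y, z, k, l, m} = x * y * z * (k * l + k * m + l * m)
      + (x * y + x * z + y * z) * (k * l * m) := by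
    simp only [Multiset.insert_eq_cons, ← Multiset.cons_zero, esym_succ_cons, esym_zero,
      esym_succ_zero]
    ring
  have e₆ : esym 6 {x, y, z, k, l, m} = x * y * z * (k * l * m) := by
    simp only [Multiset.insert_eq_cons, ← Multiset.cons_zero, esym_succ_cons, esym_zero,
      esym_succ_zero]
    ring
  have e₇ : Multiset.prod {x, y, z, k, l, m} = x * y * z * (k * l * m) := by
    simp only [Multiset.insert_eq_cons, Multiset.prod_cons, Multiset.prod_singleton]
    ring
  unfold locTerm oddSplit
  simp only [esym_succ_cons, Multiset.prod_cons, esym_zero, mul_one]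
  rw [hodd, numer_sub_numer_neg, e₁, e₂, e₃, e₄, e₅, e₆, e₇, mul_comm 2 u, mul_assoc u,
    mul_div_mul_left _ _ hu]

theorem tup_eq (a : Fin 3 → ℝ) (b : Fin 4 → ℝ) (c : ℝ) (ε : Fin 3 → Bool) (j : Fin 4)
    (δ : Bool) (k l m : Fin 4) (hj : Finset.univ.erase j = {k, l, m}) (hkl : k ≠ l) (hkm : k ≠ m)
    (hlm : l ≠ m) :
    tup a b c ε j δ =
      (sgn δ * (c - (∑ i ∈ Finset.univ.filter (fun i => ε i = false), a i) + 2 * b j)) ::ₘ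
        {sgn (ε 0) * a 0, sgn (ε 1) * a 1, sgn (ε 2) * a 2, b k - b j, b l - b j, b m - b j} := by
  unfold tup
  rw [hj, Finset.insert_val_of_notMem (by simp [hkl, hkm]),
    Finset.insert_val_of_notMem (by simp [hlm]), Finset.singleton_val, add_comm,
    Multiset.singleton_add]
  simp [Multiset.insert_eq_cons, ← Multiset.singleton_add, add_assoc]

theorem sum_bool_cube (f : (Fin 3 → Bool) → ℝ) :
    ∑ ε : Fin 3 → Bool, f ε = f ![true, true, true] + f ![false, true, true]
      + f ![true, false, true] + f ![true, true, false] + f ![false, false, true]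
      + f ![false, true, false] + f ![true, false, false] + f ![false, false, false] := by
  have h : (Finset.univ : Finset (Fin 3 → Bool)) = {![true, true, true], ![false, true, true],
      ![true, false, true], ![true, true, false], ![false, false, true], ![false, true, false],
      ![true, false, false], ![false, false, false]} := by decide
  rw [h]
  repeat rw [Finset.sum_insert (by decide)]
  rw [Finset.sum_singleton]
  ring

/-- The sum over `ε` and `δ` for fixed `j`. -/
theorem sum_signs (a : Fin 3 → ℝ) (b : Fin 4 → ℝ) (c : ℝ)
    (hgen : ∀ (ε : Fin 3 → Bool) (j : Fin 4) (δ : Bool), ∀ x ∈ tup a b c ε j δ, x ≠ 0)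
    (j k l m : Fin 4) (hj : Finset.univ.erase j = {k, l, m}) (hkl : k ≠ l) (hkm : k ≠ m)
    (hlm : l ≠ m) :
    ∑ ε : Fin 3 → Bool, ∑ δ : Bool, locTerm (tup a b c ε j δ)
      = residualQuartic (a 0 ^ 2 + a 1 ^ 2 + a 2 ^ 2) (a 0 ^ 4 + a 1 ^ 4 + a 2 ^ 4)
          ((b k - b j) + (b l - b j) + (b m - b j))
          ((b k - b j) * (b l - b j) + (b k - b j) * (b m - b j) + (b l - b j) * (b m - b j))
          ((b k - b j) * (b l - b j) * (b m - b j))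
          (2 * c - (a 0 + a 1 + a 2) + 4 * b j)
        / ((b k - b j) * (b l - b j) * (b m - b j)) := by
  have ht := fun ε δ => tup_eq a b c ε j δ k l m hj hkl hkm hlm
  have hne : ∀ ε : Fin 3 → Bool,
      c - (∑ i ∈ Finset.univ.filter (fun i => ε i = false), a i) + 2 * b j ≠ 0 := by
    intro ε
    have h := hgen ε j true
    rw [ht] at h
    simpa [sgn] using h _ (Multiset.mem_cons_self _ _)
  have ha : a 0 ≠ 0 ∧ a 1 ≠ 0 ∧ a 2 ≠ 0 := by
    have h := hgen (fun _ => true) j true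
    rw [ht] at h
    exact ⟨h _ (by simp [sgn]), h _ (by simp [sgn]), h _ (by simp [sgn])⟩
  obtain ⟨ha0, ha1, ha2⟩ := ha
  have hδ : ∀ ε, ∑ δ : Bool, locTerm (tup a b c ε j δ) =
      2 * oddSplit ((b k - b j) + (b l - b j) + (b m - b j))
          ((b k - b j) * (b l - b j) + (b k - b j) * (b m - b j) + (b l - b j) * (b m - b j))
          ((b k - b j) * (b l - b j) * (b m - b j))
          (sgn (ε 0) * a 0) (sgn (ε 1) * a 1) (sgn (ε 2) * a 2)
          (c + 2 * b j - ∑ i ∈ Finset.univ.filter (fun i => ε i = false), a i)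
        / (sgn (ε 0) * a 0 * (sgn (ε 1) * a 1) * (sgn (ε 2) * a 2)
          * ((b k - b j) * (b l - b j) * (b m - b j))) := by
    intro ε
    rw [Fintype.sum_bool, ht, ht, add_sub_right_comm, ← locTerm_add_neg _ _ _ _ _ _ _ (hne ε)]
    simp [sgn]
  rw [Finset.sum_congr rfl fun ε _ => hδ ε, sum_bool_cube]
  generalize (b k - b j) + (b l - b j) + (b m - b j) = h₁
  generalize (b k - b j) * (b l - b j) + (b k - b j) * (b m - b j)
    + (b l - b j) * (b m - b j) = h₂
  generalize (b k - b j) * (b l - b j) * (b m - b j) = h₃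
  rw [show 2 * c - (a 0 + a 1 + a 2) + 4 * b j = 2 * (c + 2 * b j) - (a 0 + a 1 + a 2) by ring,
    ← mul_div_mul_left (residualQuartic _ _ _ _ _ _) _
      (mul_ne_zero (mul_ne_zero ha0 ha1) ha2), ← signed_sum]
  simp only [Finset.sum_filter, Fin.sum_univ_three, sgn, Matrix.cons_val, if_true, if_false,
    Bool.true_eq_false, Bool.false_eq_true, one_mul, neg_mul, mul_neg, neg_neg,
    div_neg, add_zero, zero_add, sub_zero]
  ring

theorem futaki_Td7 (a : Fin 3 → ℝ) (b : Fin 4 → ℝ) (c : ℝ)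
    (hb4 : b 3 = 0)
    (hgen : ∀ (ε : Fin 3 → Bool) (j : Fin 4) (δ : Bool),
      ∀ x ∈ tup a b c ε j δ, x ≠ 0) :
    ∑ ε : Fin 3 → Bool, ∑ j : Fin 4, ∑ δ : Bool,
      (let E : ℕ → ℝ := fun k => esym k (tup a b c ε j δ);
       ((2 * E 1 ^ 5 * E 2 - 10 * E 1 ^ 3 * E 2 ^ 2 + 10 * E 1 * E 2 ^ 3 - 2 * E 1 ^ 4 * E 3 + 11 * E 1 ^ 2 * E 2 * E 3 - E 1 * E 3 ^ 2 + 2 * E 1 ^ 3 * E 4 - 9 * E 1 * E 2 * E 4 - 2 * E 1 ^ 2 * E 5 + 2 * E 1 * E 6) * E 1) / (tup a b c ε j δ).prod)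
    = 16128 * (a 0 + a 1 + a 2 - b 0 - b 1 - b 2 - 2 * c) := by
  have hb : ∀ j k : Fin 4, k ≠ j → b k - b j ≠ 0 := by
    intro j k hkj
    refine hgen (fun _ => true) j true _ ?_
    simp only [tup, Multiset.mem_add, Multiset.mem_map]
    exact Or.inl (Or.inr ⟨k, Finset.mem_erase.2 ⟨hkj, Finset.mem_univ k⟩, rfl⟩)
  change ∑ ε : Fin 3 → Bool, ∑ j : Fin 4, ∑ δ : Bool, locTerm (tup a b c ε j δ) = _
  rw [Finset.sum_comm, Fin.sum_univ_four,
    sum_signs a b c hgen 0 1 2 3 (by decide) (by decide) (by decide) (by decide),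
    sum_signs a b c hgen 1 0 2 3 (by decide) (by decide) (by decide) (by decide),
    sum_signs a b c hgen 2 0 1 3 (by decide) (by decide) (by decide) (by decide),
    sum_signs a b c hgen 3 0 1 2 (by decide) (by decide) (by decide) (by decide)]
  have h03 := hb 3 0 (by decide)
  have h13 := hb 3 1 (by decide)
  have h23 := hb 3 2 (by decide)
  rw [hb4, sub_zero] at h03 h13 h23
  have key := sum_residualQuartic_div (b 0) (b 1) (b 2) h03 h13 h23 (hb 1 0 (by decide))
    (hb 2 0 (by decide)) (hb 2 1 (by decide)) (a 0 ^ 2 + a 1 ^ 2 + a 2 ^ 2)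
    (a 0 ^ 4 + a 1 ^ 4 + a 2 ^ 4) (2 * c - (a 0 + a 1 + a 2)) _ (fun _ _ _ _ => rfl)
  simp only [hb4, sub_zero]
  rw [key]
  ring
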